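/- arXiv:2005.02604 — 2 statements merged into one kernel-verified Lean document; each statement's English description precedes it below -/
import Mathlib

section
/- Let h be a symmetric bilinear form on V with associated symmetric endomorphism H. Every symmetric (0,2)-tensor T on V satisfies Ric_{h⧆g}(T) = −n·HT − 2·⟨T,h⟩·g − 2·tr(T)·h + 2·tr(h)·T, where (HT)(X,Y) = −T(H(X),Y) − T(X,H(Y)), ⟨T,h⟩ = Σ_{a,b} T(e_a,e_b)h(e_a,e_b), and tr(T) = Σ_a T(e_a,e_a). -/
/-!
On `(0,2)`-tensors the curvature term is the Lichnerowicz expression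
`T(Ric X, Y) + T(X, Ric Y) - ∑ⱼ (T(eⱼ, R(X,eⱼ)Y) + T(R(Y,eⱼ)X, eⱼ))`. If `R = s_A ⧆ s_B` with
`s_A(X,Y) = g(AX,Y)` and `s_B(X,Y) = g(BX,Y)`, then
`R(X,Y)Z = s_A(X,Z) BY - s_A(Y,Z) BX + s_B(X,Z) AY - s_B(Y,Z) AX`, and every sum over the
basis collapses because `∑ⱼ g(eⱼ,x) f(eⱼ) = f(x)` for linear `f`. For `A = H` and `B = id` one gets
`Ric = (n - 2) H + tr(h) id`, while the mixed sums contribute `T(HY,X) + T(Y,HX)` twice; for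
symmetric `T` these combine to the coefficient `(n - 2) + 2 = n`.
-/

open scoped RealInnerProductSpace BigOperators
open Finset

noncomputable section

variable {V : Type*} [NormedAddCommGroup V] [InnerProductSpace ℝ V]

/-- The action `(L T)(X₁,…,X_k) = −Σᵢ T(X₁,…,L(Xᵢ),…,X_k)` of a map `L : V → V`
on a `(0,k)`-tensor `T`. -/
def tact {k : ℕ} (L : V → V) (T : (Fin k → V) → ℝ) (X : Fin k → V) : ℝ :=
  -∑ i, T (Function.update X i (L (X i)))

/-- The Kulkarni–Nomizu product of two bilinear forms. -/
def knProd (s₁ s₂ : V → V → ℝ) (X Y Z W : V) : ℝ :=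
  s₁ X Z * s₂ Y W - s₁ X W * s₂ Y Z + s₁ Y W * s₂ X Z - s₁ Y Z * s₂ X W

/-- The inner product `g` as a bilinear form. -/
def gf (X Y : V) : ℝ := ⟪X, Y⟫

/-- The curvature endomorphism `R(X,Y)`, determined by `g(R(X,Y)Z,W) = R(X,Y,Z,W)`,
expressed via the orthonormal basis `e`. -/
def curvOp {n : ℕ} (e : Fin n → V) (R : V → V → V → V → ℝ) (X Y Z : V) : V :=
  ∑ a, R X Y Z (e a) • e a

/-- The curvature term `Ric_R(T)(X₁,…,X_k) = Σᵢ Σⱼ ((R(Xᵢ,eⱼ))T)(X₁,…,eⱼ,…,X_k)`. -/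
def ricTerm {n k : ℕ} (e : Fin n → V) (R : V → V → V → V → ℝ)
    (T : (Fin k → V) → ℝ) (X : Fin k → V) : ℝ :=
  ∑ i : Fin k, ∑ j : Fin n, tact (curvOp e R (X i) (e j)) T (Function.update X i (e j))

/-- The inner product of two `(0,k)`-tensors with respect to the orthonormal basis `e`. -/
def tinner {n k : ℕ} (e : Fin n → V) (S T : (Fin k → V) → ℝ) : ℝ :=
  ∑ I : Fin k → Fin n, S (fun m => e (I m)) * T (fun m => e (I m))

/-- The skew endomorphism `(A ∧ B)Z = g(A,Z)B − g(B,Z)A`. -/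
def wedgeOp (A B Z : V) : V := ⟪A, Z⟫ • B - ⟪B, Z⟫ • A

lemma update_pair_zero {α : Type*} (x y z : α) : Function.update ![x, y] 0 z = ![z, y] :=
  Fin.update_cons_zero (α := fun _ => α) x ![y] z

lemma update_pair_one {α : Type*} (x y z : α) : Function.update ![x, y] 1 z = ![x, z] := by
  ext i
  fin_cases i <;> simp

lemma tact_pair {α : Type*} (L : α → α) (T : (Fin 2 → α) → ℝ) (X Y : α) :
    tact L T ![X, Y] = -(T ![L X, Y] + T ![X, L Y]) := by
  simp [tact, update_pair_zero, update_pair_one]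

lemma tact_pair_comm {α : Type*} (L : α → α) {T : (Fin 2 → α) → ℝ}
    (hT : ∀ X Y, T ![X, Y] = T ![Y, X]) (X Y : α) : tact L T ![X, Y] = tact L T ![Y, X] := by
  rw [tact_pair, tact_pair, hT (L X), hT X, add_comm]

section Bilinear

variable {R M N : Type*} [CommSemiring R] [AddCommMonoid M] [AddCommMonoid N] [Module R M]
  [Module R N]

/-- A multilinear map in two variables as a curried bilinear map, so that sums and differences
can be expanded in either argument. -/
def bilinOfPair (T : MultilinearMap R (fun _ : Fin 2 => M) N) : M →ₗ[R] M →ₗ[R] N :=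
  LinearMap.mk₂ R (fun x y => T ![x, y])
    (fun x x' y => T.cons_add ![y] x x')
    (fun c x y => T.cons_smul ![y] c x)
    (fun x y y' => by simpa only [update_pair_one] using T.map_update_add ![x, y] 1 y y')
    (fun c x y => by simpa only [update_pair_one] using T.map_update_smul ![x, y] 1 c y)

lemma bilinOfPair_apply (T : MultilinearMap R (fun _ : Fin 2 => M) N) (x y : M) :
    bilinOfPair T x y = T ![x, y] :=
  rfl

end Bilinear

lemma sum_inner_smul_map {ι 𝕜 E F : Type*} [Fintype ι] [RCLike 𝕜] [NormedAddCommGroup E]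
    [InnerProductSpace 𝕜 E] [AddCommGroup F] [Module 𝕜 F] (b : OrthonormalBasis ι 𝕜 E)
    (f : E →ₗ[𝕜] F) (x : E) : ∑ i, inner 𝕜 (b i) x • f (b i) = f x := by
  simp only [← map_smul, ← map_sum, b.sum_repr']

section Contraction

variable {ι F : Type*} [Fintype ι] [AddCommGroup F] [Module ℝ F] (e : OrthonormalBasis ι ℝ V)
  (T : V →ₗ[ℝ] V →ₗ[ℝ] F) (A : V →ₗ[ℝ] V)

lemma sum_apply_map_eq_sum_sum_inner_smul :
    ∑ a, T (e a) (A (e a)) = ∑ a, ∑ b, ⟪A (e a), e b⟫ • T (e a) (e b) := by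
  refine sum_congr rfl fun a _ => ?_
  simp only [real_inner_comm (e _) (A (e a)), sum_inner_smul_map]

variable {A} in
lemma sum_map_apply_eq_sum_apply_map (hA : A.IsSymmetric) :
    ∑ a, T (A (e a)) (e a) = ∑ a, T (e a) (A (e a)) := by
  calc ∑ a, T (A (e a)) (e a) = ∑ a, ∑ b, ⟪A (e a), e b⟫ • T (e b) (e a) :=
        sum_apply_map_eq_sum_sum_inner_smul e T.flip A
    _ = ∑ b, ∑ a, ⟪A (e b), e a⟫ • T (e b) (e a) := by
        rw [sum_comm]
        exact sum_congr rfl fun b _ => sum_congr rfl fun a _ => by rw [hA, real_inner_comm]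
    _ = ∑ b, T (e b) (A (e b)) := (sum_apply_map_eq_sum_sum_inner_smul e T A).symm

end Contraction

/-- The bilinear form `s_A(X,Y) = g(AX,Y)` associated with an endomorphism `A`. -/
def assocForm (A : V →ₗ[ℝ] V) (X Y : V) : ℝ := ⟪A X, Y⟫

lemma gf_eq_assocForm_id : (gf : V → V → ℝ) = assocForm LinearMap.id :=
  rfl

lemma assocForm_comm {A : V →ₗ[ℝ] V} (hA : A.IsSymmetric) (X Y : V) :
    assocForm A X Y = assocForm A Y X :=
  (hA X Y).trans (real_inner_comm _ _)

lemma sum_assocForm_self {ι : Type*} [Fintype ι] (e : OrthonormalBasis ι ℝ V) (A : V →ₗ[ℝ] V) :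
    ∑ a, assocForm A (e a) (e a) = LinearMap.trace ℝ V A := by
  simp only [assocForm, real_inner_comm, A.trace_eq_sum_inner e]

/-- The Ricci endomorphism of `R`. The minus sign matches the sign convention of the
Kulkarni–Nomizu product: for `R = g ⧆ g` one has `g(R(X,Y)Y,X) ≤ 0`. -/
def ricciOp {n : ℕ} (e : Fin n → V) (R : V → V → V → V → ℝ) (X : V) : V :=
  -∑ j, curvOp e R X (e j) (e j)

lemma ricTerm_pair {n : ℕ} (e : Fin n → V) (R : V → V → V → V → ℝ)
    (T : MultilinearMap ℝ (fun _ : Fin 2 => V) ℝ) (X Y : V) :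
    ricTerm e R T ![X, Y] = T ![ricciOp e R X, Y] + T ![X, ricciOp e R Y]
      - (∑ j, T ![e j, curvOp e R X (e j) Y] + ∑ j, T ![curvOp e R Y (e j) X, e j]) := by
  simp only [ricTerm, Fin.sum_univ_two, update_pair_zero, update_pair_one, tact_pair,
    Matrix.cons_val_zero, Matrix.cons_val_one, ← bilinOfPair_apply, ricciOp, map_neg, map_sum,
    LinearMap.neg_apply, LinearMap.sum_apply, sum_neg_distrib, sum_add_distrib]
  ring

section KulkarniNomizu

variable {n : ℕ} (e : OrthonormalBasis (Fin n) ℝ V) (A B : V →ₗ[ℝ] V)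

lemma curvOp_knProd (X Y Z : V) :
    curvOp e (knProd (assocForm A) (assocForm B)) X Y Z =
      assocForm A X Z • B Y - assocForm A Y Z • B X
        + assocForm B X Z • A Y - assocForm B Y Z • A X := by
  have expand (W : V) : W = ∑ a, ⟪W, e a⟫ • e a := by
    simpa only [real_inner_comm] using (e.sum_repr' W).symm
  rw [expand (B Y), expand (B X), expand (A Y), expand (A X)]
  simp only [curvOp, knProd, smul_sum, ← sum_add_distrib, ← sum_sub_distrib]
  refine sum_congr rfl fun a _ => ?_
  simp only [assocForm]
  module

lemma ricciOp_knProd (X : V) :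
    ricciOp e (knProd (assocForm A) (assocForm B)) X =
      LinearMap.trace ℝ V A • B X + LinearMap.trace ℝ V B • A X - B (A X) - A (B X) := by
  have contract (f g : V →ₗ[ℝ] V) : ∑ j, assocForm f X (e j) • g (e j) = g (f X) := by
    simp only [assocForm, real_inner_comm (e _), sum_inner_smul_map]
  simp only [ricciOp, curvOp_knProd, sum_add_distrib, sum_sub_distrib, contract, ← sum_smul,
    sum_assocForm_self]
  abel

lemma ricciOp_knProd_gf (X : V) :
    ricciOp e (knProd (assocForm A) gf) X =
      ((n : ℝ) - 2) • A X + LinearMap.trace ℝ V A • X := by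
  have trace_id : LinearMap.trace ℝ V LinearMap.id = n := by
    simp [← sum_assocForm_self e, assocForm]
  rw [gf_eq_assocForm_id, ricciOp_knProd, trace_id]
  simp only [LinearMap.id_apply]
  module

variable {A B}

lemma sum_apply_curvOp_knProd {F : Type*} [AddCommGroup F] [Module ℝ F]
    (hA : A.IsSymmetric) (hB : B.IsSymmetric) (T : V →ₗ[ℝ] V →ₗ[ℝ] F) (X Y : V) :
    ∑ j, T (e j) (curvOp e (knProd (assocForm A) (assocForm B)) X (e j) Y) =
      assocForm A X Y • ∑ j, T (e j) (B (e j)) + assocForm B X Y • ∑ j, T (e j) (A (e j))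
        - T (A Y) (B X) - T (B Y) (A X) := by
  have contract {f : V →ₗ[ℝ] V} (hf : f.IsSymmetric) (Z : V) :
      ∑ j, assocForm f (e j) Y • T (e j) Z = T (f Y) Z := by
    simpa only [assocForm, hf _ Y, LinearMap.flip_apply] using sum_inner_smul_map e (T.flip Z) (f Y)
  simp only [curvOp_knProd, map_add, map_sub, map_smul, sum_add_distrib, sum_sub_distrib,
    contract hA, contract hB, ← smul_sum]
  abel

theorem ricTerm_knProd (hA : A.IsSymmetric) (hB : B.IsSymmetric)
    (T : MultilinearMap ℝ (fun _ : Fin 2 => V) ℝ) (X Y : V) :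
    ricTerm e (knProd (assocForm A) (assocForm B)) T ![X, Y] =
      T ![ricciOp e (knProd (assocForm A) (assocForm B)) X, Y]
        + T ![X, ricciOp e (knProd (assocForm A) (assocForm B)) Y]
        + 2 * (T ![A Y, B X] + T ![B Y, A X])
        - 2 * (assocForm A X Y * ∑ a, T ![e a, B (e a)]
          + assocForm B X Y * ∑ a, T ![e a, A (e a)]) := by
  have left := sum_apply_curvOp_knProd e hA hB (bilinOfPair T) X Y
  have right := sum_apply_curvOp_knProd e hA hB (bilinOfPair T).flip Y X
  simp only [LinearMap.flip_apply, sum_map_apply_eq_sum_apply_map e _ hA,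
    sum_map_apply_eq_sum_apply_map e _ hB, assocForm_comm hA Y, assocForm_comm hB Y] at right
  simp only [bilinOfPair_apply, smul_eq_mul] at left right
  rw [ricTerm_pair, left, right]
  ring

end KulkarniNomizu

theorem stmt3_general {n : ℕ} (e : OrthonormalBasis (Fin n) ℝ V)
    (H : V →ₗ[ℝ] V) (hHsym : H.IsSymmetric)
    (h : V → V → ℝ) (hh : ∀ X Y : V, h X Y = ⟪H X, Y⟫)
    (T : MultilinearMap ℝ (fun _ : Fin 2 => V) ℝ) (X Y : V) :
    ricTerm e (knProd h gf) T ![X, Y] =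
      -((n : ℝ) - 2) * tact H T ![X, Y] - 2 * tact H T ![Y, X]
      - 2 * (∑ a, ∑ b, T ![e a, e b] * h (e a) (e b)) * ⟪X, Y⟫
      - 2 * (∑ a, T ![e a, e a]) * h X Y
      + 2 * (∑ a, h (e a) (e a)) * T ![X, Y] := by
  obtain rfl : h = assocForm H := funext₂ hh
  have pairing : ∑ a, T ![e a, H (e a)] = ∑ a, ∑ b, T ![e a, e b] * assocForm H (e a) (e b) := by
    simp only [mul_comm (T _)]
    exact sum_apply_map_eq_sum_sum_inner_smul e (bilinOfPair T) H
  have formula := ricTerm_knProd e hHsym LinearMap.IsSymmetric.id T X Y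
  rw [← gf_eq_assocForm_id, ricciOp_knProd_gf, ricciOp_knProd_gf, pairing] at formula
  rw [formula, tact_pair, tact_pair, sum_assocForm_self]
  simp only [← bilinOfPair_apply, map_add, map_smul, LinearMap.add_apply, LinearMap.smul_apply,
    smul_eq_mul, LinearMap.id_apply, gf]
  ring

/-- Proposition 3.3(1), first identity: the weighted curvature term on
symmetric (0,2)-tensors. -/
theorem stmt3 {n : ℕ} (e : OrthonormalBasis (Fin n) ℝ V)
    (H : V →ₗ[ℝ] V) (hHsym : ∀ X Y : V, ⟪H X, Y⟫ = ⟪X, H Y⟫)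
    (h : V → V → ℝ) (hh : ∀ X Y : V, h X Y = ⟪H X, Y⟫)
    (T : MultilinearMap ℝ (fun _ : Fin 2 => V) ℝ)
    (hTsym : ∀ X Y : V, T ![X, Y] = T ![Y, X]) :
    ∀ X Y : V,
      ricTerm ⇑e (knProd h gf) ⇑T ![X, Y] =
        -(n : ℝ) * tact ⇑H ⇑T ![X, Y]
        - 2 * (∑ a : Fin n, ∑ b : Fin n, T ![e a, e b] * h (e a) (e b)) * ⟪X, Y⟫
        - 2 * (∑ a : Fin n, T ![e a, e a]) * h X Y
        + 2 * (∑ a : Fin n, h (e a) (e a)) * T ![X, Y] := by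
  intro X Y
  rw [stmt3_general e H hHsym h hh T, tact_pair_comm H hTsym Y X]
  ring
end
end

section
/- Let h be a symmetric bilinear form on V with associated symmetric endomorphism H. Every Weyl tensor W on V satisfies ⟨Ric_{h⧆g}(W), W⟩ = −(n−2)·⟨HW, W⟩ + 4·tr(h)·|W|². -/
/-!
In `Ric_R(T)` with `R = h ⧆ g`, the endomorphism `R(Xᵢ, eⱼ)` acts on some slot `l`. For `l = i` it
is contracted to the Ricci endomorphism of `h ⧆ g`, and these terms give `−(n−2) HT + k tr(h) T`.
For `l ≠ i` one finds a multiple of a trace of `T`, a multiple of `g(Xᵢ, X_l)`, which is orthogonal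
to every trace-free tensor, and `T` with the slots `i` and `l` exchanged and `H` inserted into one
of them. Summing the exchanges over `l` with the slot of `H` fixed leaves the sum of all
transpositions of `T` that move this slot. For a curvature tensor this sum is zero: that is the
first Bianchi identity.
-/

open scoped RealInnerProductSpace BigOperators
open Finset

noncomputable section

variable {V : Type*} [NormedAddCommGroup V] [InnerProductSpace ℝ V]

theorem update_comp_swap {ι α : Type*} [DecidableEq ι] {i l : ι} (hil : i ≠ l)
    (X : ι → α) (v : α) :
    Function.update X i v ∘ Equiv.swap i l = Function.update (Function.update X i (X l)) l v := by
  rw [Equiv.comp_swap_eq_update, Function.update_self, Function.update_of_ne hil.symm,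
    Function.update_comm hil.symm, Function.update_idem, Function.update_comm hil]

section UpdateSums

variable {ι α M : Type*} [Fintype ι] [DecidableEq ι] [Fintype α] [AddCommMonoid M]

theorem sum_sum_update_apply (i : ι) (F : (ι → α) → α → M) :
    ∑ I, ∑ a, F (Function.update I i a) (I i) = ∑ I, ∑ a, F I a := by
  let σ : (ι → α) × α → (ι → α) × α := fun p => (Function.update p.1 i p.2, p.1 i)
  have hσ : Function.Involutive σ := fun p => by simp [σ]
  rw [← Fintype.sum_prod_type', ← Fintype.sum_prod_type']
  exact Equiv.sum_comp hσ.toPerm fun p : (ι → α) × α => F p.1 p.2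

theorem sum_sum_update (i : ι) (F : (ι → α) → M) :
    ∑ I, ∑ a, F (Function.update I i a) = Fintype.card α • ∑ I, F I := by
  rw [sum_sum_update_apply i fun I _ => F I]
  simp only [sum_const, card_univ, smul_sum]

theorem sum_eq_zero_of_sum_update_update_eq_zero [IsAddTorsionFree M] (i l : ι)
    {F : (ι → α) → M}
    (hF : ∀ I, ∑ a, ∑ b, F (Function.update (Function.update I i a) l b) = 0) :
    ∑ I, F I = 0 := by
  cases isEmpty_or_nonempty α
  · have : IsEmpty (ι → α) := ⟨fun I => isEmptyElim (I i)⟩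
    exact Fintype.sum_empty F
  · have average : Fintype.card α • Fintype.card α • ∑ I, F I = 0 := by
      rw [← sum_sum_update l F, ← sum_sum_update i]
      exact sum_eq_zero fun I _ => hF I
    simpa [Fintype.card_ne_zero] using average

end UpdateSums

section TensorNotions

variable {n k : ℕ}

/-- The sum of all transpositions of the `(0,k)`-tensor `T` that move the slot `i`. If `T` has the
symmetry type of a rectangular Young diagram, this is a fixed multiple of `T`, namely the number of
columns minus the number of rows: `1 - k` for `k`-forms, `k - 1` for symmetric tensors, and `0` for
curvature tensors. -/
def exchangeSum (T : (Fin k → V) → ℝ) (i : Fin k) (X : Fin k → V) : ℝ :=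
  ∑ l ∈ univ.erase i, T (X ∘ Equiv.swap i l)

/-- The tensors all of whose traces, over any two distinct slots, vanish; on curvature tensors
this is the vanishing of the Ricci contraction. -/
def IsTraceFree (e : Fin n → V) (T : (Fin k → V) → ℝ) : Prop :=
  ∀ ⦃i l : Fin k⦄, i ≠ l → ∀ X : Fin k → V,
    ∑ a, T (Function.update (Function.update X i (e a)) l (e a)) = 0

end TensorNotions

section KulkarniNomizu

variable {n k : ℕ} (e : OrthonormalBasis (Fin n) ℝ V)

theorem curvOp_eq_of_forall_inner {R : V → V → V → V → ℝ} {X Y Z v : V}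
    (hv : ∀ w, R X Y Z w = ⟪v, w⟫) : curvOp e R X Y Z = v := by
  simpa only [curvOp, hv, real_inner_comm] using e.sum_repr' v

theorem curvOp_knProd_gf {H : V → V} {h : V → V → ℝ} (hh : ∀ X Y, h X Y = ⟪H X, Y⟫) (X Y Z : V) :
    curvOp e (knProd h gf) X Y Z =
      h X Z • Y - ⟪Y, Z⟫ • H X + ⟪X, Z⟫ • H Y - h Y Z • X := by
  refine curvOp_eq_of_forall_inner e fun w => ?_
  simp only [knProd, gf, hh X w, hh Y w, inner_add_left, inner_sub_left, real_inner_smul_left]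
  ring

theorem sum_curvOp_knProd_gf_self {H : V →ₗ[ℝ] V} {h : V → V → ℝ} (hh : ∀ X Y, h X Y = ⟪H X, Y⟫)
    (x : V) :
    ∑ j, curvOp e (knProd h gf) x (e j) (e j) =
      -((n : ℝ) - 2) • H x - (∑ a, h (e a) (e a)) • x := by
  have expand (u : V) : ∑ j, ⟪u, e j⟫ • e j = u := by
    simpa only [real_inner_comm] using e.sum_repr' u
  have expand_map : ∑ j, ⟪x, e j⟫ • H (e j) = H x := by
    simpa only [map_sum, map_smul] using congrArg H (expand x)
  have contract_h : ∑ j, h x (e j) • e j = H x := by simpa only [hh] using expand (H x)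
  have inner_self (j : Fin n) : ⟪e j, e j⟫ = (1 : ℝ) := by simp
  simp only [curvOp_knProd_gf e hh, sum_add_distrib, sum_sub_distrib, contract_h, expand_map,
    inner_self, ← sum_smul, sum_const, card_univ, Fintype.card_fin, nsmul_eq_mul, mul_one]
  module

theorem sum_curvOp_knProd_gf_offdiag {H : V → V} {h : V → V → ℝ}
    (hh : ∀ X Y, h X Y = ⟪H X, Y⟫) (T : MultilinearMap ℝ (fun _ : Fin k => V) ℝ)
    {i l : Fin k} (hil : i ≠ l) (X : Fin k → V) :
    ∑ j, T (Function.update (Function.update X i (e j)) l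
        (curvOp e (knProd h gf) (X i) (e j) (X l))) =
      h (X i) (X l) * ∑ j, T (Function.update (Function.update X i (e j)) l (e j))
      + ⟪X i, X l⟫ * ∑ j, T (Function.update (Function.update X i (e j)) l (H (e j)))
      - T (Function.update X i (H (X i)) ∘ Equiv.swap i l)
      - ∑ j, h (e j) (X l) * T (Function.update X l (e j) ∘ Equiv.swap l i) := by
  have expand : ∑ j, ⟪e j, X l⟫ * T (Function.update (Function.update X i (e j)) l (H (X i))) =
      T (Function.update (Function.update X i (X l)) l (H (X i))) := by
    simp only [Function.update_comm hil]
    simpa only [map_sum, map_smul, smul_eq_mul, MultilinearMap.toLinearMap_apply] using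
      congrArg (T.toLinearMap (Function.update X l (H (X i))) i) (e.sum_repr' (X l))
  simp only [curvOp_knProd_gf e hh, T.map_update_add, T.map_update_sub, T.map_update_smul,
    smul_eq_mul, sum_add_distrib, sum_sub_distrib, ← mul_sum, expand, update_comp_swap hil,
    update_comp_swap hil.symm, Function.update_comm (β := fun _ => V) hil (e _) (X i)]
  ring

end KulkarniNomizu

section CurvatureTerm

variable {n k : ℕ}

theorem ricTerm_eq_diag_add_offdiag (e : Fin n → V) (R : V → V → V → V → ℝ)
    (T : MultilinearMap ℝ (fun _ : Fin k => V) ℝ) (X : Fin k → V) :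
    ricTerm e R T X =
      -∑ i, T (Function.update X i (∑ j, curvOp e R (X i) (e j) (e j)))
      - ∑ i, ∑ l ∈ univ.erase i, ∑ j,
          T (Function.update (Function.update X i (e j)) l (curvOp e R (X i) (e j) (X l))) := by
  simp only [ricTerm, tact, sum_neg_distrib, ← sum_add_distrib, neg_sub_left, neg_inj]
  refine sum_congr rfl fun i _ => ?_
  rw [sum_comm, ← add_sum_erase _ _ (mem_univ i), T.map_update_sum, add_comm]
  congr 1
  · refine sum_congr rfl fun l hl => ?_
    simp only [Function.update_of_ne (ne_of_mem_erase hl)]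
  · simp only [Function.update_self, Function.update_idem]

theorem sum_map_update_sum_curvOp_knProd_gf (e : OrthonormalBasis (Fin n) ℝ V)
    {H : V →ₗ[ℝ] V} {h : V → V → ℝ} (hh : ∀ X Y, h X Y = ⟪H X, Y⟫)
    (T : MultilinearMap ℝ (fun _ : Fin k => V) ℝ) (X : Fin k → V) :
    ∑ i, T (Function.update X i (∑ j, curvOp e (knProd h gf) (X i) (e j) (e j))) =
      ((n : ℝ) - 2) * tact H T X - k * (∑ a, h (e a) (e a)) * T X := by
  simp only [sum_curvOp_knProd_gf_self e hh, T.map_update_sub, T.map_update_smul, smul_eq_mul,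
    Function.update_eq_self, sum_sub_distrib, ← mul_sum, sum_const, card_univ, Fintype.card_fin,
    nsmul_eq_mul, tact]
  ring

theorem ricTerm_knProd_gf (e : OrthonormalBasis (Fin n) ℝ V) {H : V →ₗ[ℝ] V} {h : V → V → ℝ}
    (hh : ∀ X Y, h X Y = ⟪H X, Y⟫) {T : MultilinearMap ℝ (fun _ : Fin k => V) ℝ}
    (hT : IsTraceFree e T) (X : Fin k → V) :
    ricTerm e (knProd h gf) T X =
      -((n : ℝ) - 2) * tact H T X + k * (∑ a, h (e a) (e a)) * T X
      + ∑ i, exchangeSum T i (Function.update X i (H (X i)))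
      + ∑ i, ∑ j, h (e j) (X i) * exchangeSum T i (Function.update X i (e j))
      - ∑ i, ∑ l ∈ univ.erase i,
          ⟪X i, X l⟫ * ∑ j, T (Function.update (Function.update X i (e j)) l (H (e j))) := by
  have offdiag (i : Fin k) : ∀ l ∈ univ.erase i, ∑ j, T (Function.update
      (Function.update X i (e j)) l (curvOp e (knProd h gf) (X i) (e j) (X l))) =
        ⟪X i, X l⟫ * ∑ j, T (Function.update (Function.update X i (e j)) l (H (e j)))
        - T (Function.update X i (H (X i)) ∘ Equiv.swap i l)
        - ∑ j, h (e j) (X l) * T (Function.update X l (e j) ∘ Equiv.swap l i) := fun l hl => by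
    have hil := (ne_of_mem_erase hl).symm
    rw [sum_curvOp_knProd_gf_offdiag e hh T hil, hT hil, mul_zero, zero_add]
  have exchange : ∑ i, ∑ l ∈ univ.erase i, ∑ j,
      h (e j) (X l) * T (Function.update X l (e j) ∘ Equiv.swap l i) =
        ∑ i, ∑ j, h (e j) (X i) * exchangeSum T i (Function.update X i (e j)) := by
    simp only [exchangeSum, mul_sum]
    rw [sum_comm' (t' := univ) (s' := fun l => univ.erase l) (by simp [eq_comm])]
    exact sum_congr rfl fun l _ => sum_comm
  rw [ricTerm_eq_diag_add_offdiag, sum_map_update_sum_curvOp_knProd_gf e hh,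
    sum_congr rfl fun i _ => sum_congr rfl (offdiag i)]
  simp only [sum_sub_distrib, exchange]
  simp only [exchangeSum]
  ring

end CurvatureTerm

section Pairing

variable {E : Type*} {n k : ℕ}

theorem tinner_eq_sum_comp (e : Fin n → E) (S T : (Fin k → E) → ℝ) :
    tinner e S T = ∑ I : Fin k → Fin n, S (e ∘ I) * T (e ∘ I) :=
  rfl

theorem tinner_sum_left {ι : Type*} (e : Fin n → E) (s : Finset ι)
    (S : ι → (Fin k → E) → ℝ) (T : (Fin k → E) → ℝ) :
    tinner e (fun X => ∑ i ∈ s, S i X) T = ∑ i ∈ s, tinner e (S i) T := by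
  simp only [tinner, sum_mul]
  exact sum_comm

theorem tinner_inner_mul_eq_zero (e : OrthonormalBasis (Fin n) ℝ V) {S T : (Fin k → V) → ℝ}
    (hT : IsTraceFree e T) {i l : Fin k} (hil : i ≠ l)
    (hS : ∀ X x y, S (Function.update (Function.update X i x) l y) = S X) :
    tinner e (fun X => ⟪X i, X l⟫ * S X) T = 0 := by
  rw [tinner_eq_sum_comp]
  refine sum_eq_zero_of_sum_update_update_eq_zero i l fun I => ?_
  simp only [Function.comp_update, Function.update_self, Function.update_of_ne hil, hS,
    e.inner_eq_ite, ite_mul, one_mul, zero_mul, sum_ite_eq, mem_univ, if_true, ← mul_sum,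
    hT hil, mul_zero]

theorem tinner_sum_inner_mul_eq_zero (e : OrthonormalBasis (Fin n) ℝ V) (H : V → V)
    {T : (Fin k → V) → ℝ} (hT : IsTraceFree e T) :
    tinner e (fun X => ∑ i, ∑ l ∈ univ.erase i, ⟪X i, X l⟫ *
      ∑ j, T (Function.update (Function.update X i (e j)) l (H (e j)))) T = 0 := by
  simp only [tinner_sum_left]
  refine sum_eq_zero fun i _ => sum_eq_zero fun l hl => ?_
  have hil := (ne_of_mem_erase hl).symm
  refine tinner_inner_mul_eq_zero e hT hil fun X x y => ?_
  simp only [Function.update_comm (β := fun _ => V) hil.symm y, Function.update_idem]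

theorem tinner_sum_mul_update (e : OrthonormalBasis (Fin n) ℝ V) {H : V → V} {h : V → V → ℝ}
    (hh : ∀ X Y, h X Y = ⟪H X, Y⟫) (T : MultilinearMap ℝ (fun _ : Fin k => V) ℝ) (i : Fin k) :
    tinner e (fun X => ∑ j, h (e j) (X i) * T (Function.update X i (e j))) T =
      tinner e (fun X => T (Function.update X i (H (X i)))) T := by
  have expand (X : Fin k → V) (u : V) :
      ∑ j, ⟪u, e j⟫ * T (Function.update X i (e j)) = T (Function.update X i u) := by
    simpa only [map_sum, map_smul, smul_eq_mul, MultilinearMap.toLinearMap_apply,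
      real_inner_comm] using congrArg (T.toLinearMap X i) (e.sum_repr' u)
  have transpose := sum_sum_update_apply i fun (I : Fin k → Fin n) (j : Fin n) =>
    h (e j) (e (I i)) * T (e ∘ Function.update I i j) * T (e ∘ I)
  simp only [Function.update_self, Function.update_idem, Function.update_eq_self] at transpose
  simp only [tinner_eq_sum_comp, Function.comp_apply, ← expand _ (H _), ← hh, sum_mul,
    ← Function.comp_update]
  simpa only [mul_right_comm] using transpose.symm

theorem tinner_sum_sum_mul_update (e : OrthonormalBasis (Fin n) ℝ V) {H : V → V} {h : V → V → ℝ}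
    (hh : ∀ X Y, h X Y = ⟪H X, Y⟫) (T : MultilinearMap ℝ (fun _ : Fin k => V) ℝ) :
    tinner e (fun X => ∑ i, ∑ j, h (e j) (X i) * T (Function.update X i (e j))) T =
      -tinner e (tact H T) T := by
  rw [tinner_sum_left]
  simp only [tinner_sum_mul_update e hh, ← tinner_sum_left]
  simp only [tinner, tact, neg_mul, sum_neg_distrib, neg_neg]

end Pairing

theorem apply_eq_apply_vec {E : Type*} (W : (Fin 4 → E) → ℝ) (X : Fin 4 → E) :
    W X = W ![X 0, X 1, X 2, X 3] :=
  congrArg W (FinVec.etaExpand_eq X).symm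

/-- The symmetries of an algebraic curvature tensor. Multilinearity is not part of the predicate: it
is carried by the type of the tensors to which the predicate is applied. -/
structure IsAlgebraicCurvatureTensor {E : Type*} (W : (Fin 4 → E) → ℝ) : Prop where
  antisymm (x y z w : E) : W ![x, y, z, w] = -W ![y, x, z, w]
  pair_symm (x y z w : E) : W ![x, y, z, w] = W ![z, w, x, y]
  bianchi (x y z w : E) : W ![x, y, z, w] + W ![y, z, x, w] + W ![z, x, y, w] = 0

namespace IsAlgebraicCurvatureTensor

variable {E : Type*} {W : (Fin 4 → E) → ℝ}

theorem antisymm_right (hW : IsAlgebraicCurvatureTensor W) (x y z w : E) :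
    W ![x, y, z, w] = -W ![x, y, w, z] := by
  rw [hW.pair_symm, hW.antisymm, hW.pair_symm w z]

theorem exchangeSum_eq_zero (hW : IsAlgebraicCurvatureTensor W) (i : Fin 4) (X : Fin 4 → E) :
    exchangeSum W i X = 0 := by
  obtain ⟨x, y, z, w, rfl⟩ : ∃ x y z w, X = ![x, y, z, w] :=
    ⟨X 0, X 1, X 2, X 3, (FinVec.etaExpand_eq X).symm⟩
  -- Exchanging a pair of slots or the complementary pair gives the same term of the Bianchi sum.
  have exchange01 : W ![y, x, z, w] = -W ![x, y, z, w] := hW.antisymm y x z w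
  have exchange23 : W ![x, y, w, z] = -W ![x, y, z, w] := hW.antisymm_right x y w z
  have exchange02 : W ![z, y, x, w] = -W ![y, z, x, w] := hW.antisymm z y x w
  have exchange13 : W ![x, w, z, y] = -W ![y, z, x, w] := by rw [hW.pair_symm, exchange02]
  have exchange12 : W ![x, z, y, w] = -W ![z, x, y, w] := hW.antisymm x z y w
  have exchange03 : W ![w, y, z, x] = -W ![z, x, y, w] := by rw [hW.pair_symm, hW.antisymm_right]
  have bianchi := hW.bianchi x y z w
  simp only [exchangeSum, ← filter_ne', sum_filter, Fin.sum_univ_four]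
  fin_cases i <;>
    simp only [ne_eq, Fin.zero_eta, Fin.mk_one, Fin.reduceFinMk, Fin.reduceEq, Fin.isValue,
      not_true_eq_false, not_false_eq_true, ↓reduceIte, zero_add, add_zero,
      apply_eq_apply_vec W (_ ∘ _), Function.comp_apply, Equiv.swap_apply_def, Matrix.cons_val] <;>
    linarith

theorem isTraceFree {n : ℕ} {e : Fin n → E} (hW : IsAlgebraicCurvatureTensor W)
    (hRic : ∀ x z, ∑ a, W ![x, e a, z, e a] = 0) : IsTraceFree e W := by
  have trace01 (v z w : E) : W ![v, v, z, w] = 0 := by linarith [hW.antisymm v v z w]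
  have trace23 (v x y : E) : W ![x, y, v, v] = 0 := by rw [hW.pair_symm, trace01]
  have trace12 (v x w : E) : W ![x, v, v, w] = -W ![x, v, w, v] := hW.antisymm_right x v v w
  have trace03 (v y z : E) : W ![v, y, z, v] = -W ![y, v, z, v] := hW.antisymm v y z v
  have trace02 (y w : E) : ∑ a, W ![e a, y, e a, w] = 0 := by
    simp only [hW.antisymm (e _) y, trace12, neg_neg, hRic]
  intro i l hil X
  fin_cases i <;> fin_cases l <;>
    simp [apply_eq_apply_vec W (Function.update _ _ _), trace01, trace23, trace12, trace03,
      trace02, hRic] at hil ⊢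

end IsAlgebraicCurvatureTensor

/-- Weyl tensors have `k = 4` and `c = 0`; `k`-forms have `c = 1 - k`, which turns the first
coefficient into `-(n - 2k)`. -/
theorem stmt12_general {n k : ℕ} (e : OrthonormalBasis (Fin n) ℝ V) {H : V →ₗ[ℝ] V}
    {h : V → V → ℝ} (hh : ∀ X Y : V, h X Y = ⟪H X, Y⟫)
    {T : MultilinearMap ℝ (fun _ : Fin k => V) ℝ} (hT : IsTraceFree e T)
    {c : ℝ} (hc : ∀ i X, exchangeSum T i X = c * T X) :
    tinner e (ricTerm e (knProd h gf) T) T =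
      -((n : ℝ) - 2 + 2 * c) * tinner e (tact H T) T
      + k * (∑ a, h (e a) (e a)) * tinner e T T := by
  let transposed (X : Fin k → V) : ℝ :=
    ∑ i, ∑ j, h (e j) (X i) * T (Function.update X i (e j))
  let metric (X : Fin k → V) : ℝ := ∑ i, ∑ l ∈ univ.erase i,
    ⟪X i, X l⟫ * ∑ j, T (Function.update (Function.update X i (e j)) l (H (e j)))
  have pointwise (X : Fin k → V) : ricTerm e (knProd h gf) T X =
      -((n : ℝ) - 2 + c) * tact H T X + k * (∑ a, h (e a) (e a)) * T X
        + c * transposed X - metric X := by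
    rw [ricTerm_knProd_gf e hh hT]
    simp only [hc, mul_left_comm _ c, ← mul_sum, tact, transposed, metric]
    ring
  calc tinner e (ricTerm e (knProd h gf) T) T
      = -((n : ℝ) - 2 + c) * tinner e (tact H T) T
        + k * (∑ a, h (e a) (e a)) * tinner e T T
        + c * tinner e transposed T - tinner e metric T := by
        simp only [tinner, pointwise, add_mul _ _ (T _), sub_mul _ _ (T _), mul_assoc,
          sum_add_distrib, sum_sub_distrib, ← mul_sum]
    _ = _ := by
        rw [tinner_sum_sum_mul_update e hh, tinner_sum_inner_mul_eq_zero e H hT]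
        ring

/-- for a Weyl tensor, `⟨Ric_{h⧆g}(W), W⟩ = −(n−2)⟨HW,W⟩ + 4 tr(h)|W|²`. -/
theorem stmt12 {n : ℕ} (e : OrthonormalBasis (Fin n) ℝ V)
    (H : V →ₗ[ℝ] V) (hHsym : ∀ X Y : V, ⟪H X, Y⟫ = ⟪X, H Y⟫)
    (h : V → V → ℝ) (hh : ∀ X Y : V, h X Y = ⟪H X, Y⟫)
    (W : MultilinearMap ℝ (fun _ : Fin 4 => V) ℝ)
    (hA : ∀ x y z w : V, W ![x, y, z, w] = -W ![y, x, z, w])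
    (hP : ∀ x y z w : V, W ![x, y, z, w] = W ![z, w, x, y])
    (hB : ∀ x y z w : V,
      W ![x, y, z, w] + W ![y, z, x, w] + W ![z, x, y, w] = 0)
    (hRic : ∀ x z : V, (∑ a : Fin n, W ![x, e a, z, e a]) = 0) :
    tinner ⇑e (ricTerm ⇑e (knProd h gf) ⇑W) ⇑W =
      -((n : ℝ) - 2) * tinner ⇑e (tact ⇑H ⇑W) ⇑W
      + 4 * (∑ a : Fin n, h (e a) (e a)) * tinner ⇑e ⇑W ⇑W := by
  have hW : IsAlgebraicCurvatureTensor W := ⟨hA, hP, hB⟩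
  simpa using stmt12_general e hh (hW.isTraceFree hRic) (c := 0)
    fun i X => by rw [hW.exchangeSum_eq_zero, zero_mul]
end
end
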